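/- Let G be a finite r-regular graph with girth g, equipped with a random label assignment with probabilities (p₀,p), and let i ≥ 1 with 2i < g−3 and 2(i+2) < g−2. Then for any vertex u: (i) P(u ∈ W_i | u ∈ W_{i−1}) = (1 − p·s_{i−1}/w_{i−1})^r, and (ii) P(u ∈ B_i | u ∈ W_{i−1}) = (r·p·s_{i−1}/w_{i−1})·(1 − p·s_{i−1}/w_{i−1})^{r−1}. -/

import Mathlib

open MeasureTheory ProbabilityTheory Filter Set

namespace InducedForest

variable {V : Type*}

/-- Label `i` is *relevant* for vertex `v` (w.r.t. the label assignment `S`):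
either `i = 0` and `0 ∈ S v`, or `i ∈ S v`, no `j < i` is relevant for `v`, and
there is a unique neighbour of `v` having a relevant label strictly smaller than `i`. -/
def Relevant (G : SimpleGraph V) (S : V → Set ℕ) (i : ℕ) : V → Prop :=
  Nat.strongRecOn i (fun i ih v =>
    (i = 0 ∧ 0 ∈ S v) ∨
    (i ∈ S v ∧ (∀ j, (h : j < i) → ¬ ih j h v) ∧
      (∃! u, G.Adj v u ∧ ∃ j, ∃ h : j < i, ih j h u)))

/-- `v` has some relevant label `≤ l`, i.e. `v ∈ R_{≤ l}`. -/
def RelevantLe (G : SimpleGraph V) (S : V → Set ℕ) (l : ℕ) (v : V) : Prop :=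
  ∃ i ≤ l, Relevant G S i v

inductive Colour | white | blue | orange | purple
deriving DecidableEq

open Classical in
/-- The colour of `u` at time `l`. -/
noncomputable def colourAt (G : SimpleGraph V) (S : V → Set ℕ) (l : ℕ) (u : V) : Colour :=
  if RelevantLe G S l u then Colour.purple
  else if ∀ v, G.Adj u v → ¬ RelevantLe G S l v then Colour.white
  else if ∃! v, G.Adj u v ∧ RelevantLe G S l v then Colour.blue
  else Colour.orange

/-- The set `W_l` of white vertices at time `l`. -/
def White (G : SimpleGraph V) (S : V → Set ℕ) (l : ℕ) : Set V :=
  {u | ¬ RelevantLe G S l u ∧ ∀ v, G.Adj u v → ¬ RelevantLe G S l v}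

/-- The set `B_l` of blue vertices at time `l`. -/
def Blue (G : SimpleGraph V) (S : V → Set ℕ) (l : ℕ) : Set V :=
  {u | ¬ RelevantLe G S l u ∧ ∃! v, G.Adj u v ∧ RelevantLe G S l v}
/-- The label assignment determined by a sample point `ω`. -/
def labels (ω : V → ℕ → Bool) : V → Set ℕ := fun v => {i | ω v i = true}

/-- `μ` is the random label assignment with probabilities `(p₀, p)`: the events
`i ∈ S(v)` are mutually independent, and each has probability `p₀` if `i = 0`
and `p` if `i ≥ 1`. -/
def IsLabelMeasure (μ : Measure (V → ℕ → Bool)) (p₀ p : ℝ) : Prop :=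
  IsProbabilityMeasure μ ∧
  iIndepSet (fun q : V × ℕ => {ω : V → ℕ → Bool | ω q.1 q.2 = true}) μ ∧
  ∀ (v : V) (i : ℕ), μ {ω | ω v i = true} = ENNReal.ofReal (if i = 0 then p₀ else p)

/-- Event that `u` is white at time `l`. -/
def WEv (G : SimpleGraph V) (l : ℕ) (u : V) : Set (V → ℕ → Bool) :=
  {ω | u ∈ White G (labels ω) l}

/-- Event that `u` is blue at time `l`. -/
def BEv (G : SimpleGraph V) (l : ℕ) (u : V) : Set (V → ℕ → Bool) :=
  {ω | u ∈ Blue G (labels ω) l}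

/-- Event that `u` has relevant label `i`, i.e. `u ∈ R_i`. -/
def REv (G : SimpleGraph V) (i : ℕ) (u : V) : Set (V → ℕ → Bool) :=
  {ω | Relevant G (labels ω) i u}

/-- Event that `u` has a relevant label `≤ l`, i.e. `u ∈ R_{≤ l}`. -/
def RLeEv (G : SimpleGraph V) (l : ℕ) (u : V) : Set (V → ℕ → Bool) :=
  {ω | RelevantLe G (labels ω) l u}

/-- `G` is `r`-regular. -/
def IsRegular (G : SimpleGraph V) (r : ℕ) : Prop :=
  ∀ v : V, (G.neighborSet v).ncard = r

/-!
Conditioned on `u` being white, a neighbour `v` of `u` evolves as in the cavity process, in which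
`v` ignores `u`, the neighbours of `v` ignore `v`, and so on. On time scales below half the girth,
the cavity processes at different neighbours of `u` depend on the labels in disjoint branches, so
they are independent of each other and of the labels of `u`; by regularity their laws do not depend
on the edge `uv`. Let `x` and `d` be the probabilities that, in the cavity process, `v` is relevant
by time `l`, respectively blue at time `l`. Then `w_l = (1 - p₀) (1 - x) ^ r` and
`s_l = (1 - p₀) d (1 - x) ^ (r - 1)`, so that `p s_l / w_l = p d / (1 - x)` is the conditional
probability that `v` becomes relevant at time `l + 1` given that it is not relevant by time `l`.
Given that `u` is white at time `l`, each of its `r` neighbours becomes relevant at time `l + 1`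
independently with this probability; `u` stays white if none of them does, and turns blue if
exactly one does.
-/

section Branches

variable {G : SimpleGraph V}

theorem isAcyclic_of_encard_edgeSet_lt_egirth {H : SimpleGraph V} (hHG : H ≤ G)
    (hH : H.edgeSet.encard < G.egirth) : H.IsAcyclic := by
  classical
  intro v w hw
  have hgirth : G.egirth ≤ w.length :=
    (SimpleGraph.egirth_anti hHG).trans (SimpleGraph.egirth_le_length hw)
  have hlength : (w.length : ℕ∞) ≤ H.edgeSet.encard := calc
    (w.length : ℕ∞) = (w.edges.toFinset : Set (Sym2 V)).encard := by
      rw [encard_coe_eq_coe_finsetCard, List.toFinset_card_of_nodup hw.edges_nodup,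
        SimpleGraph.Walk.length_edges]
    _ ≤ H.edgeSet.encard := encard_le_encard fun e he =>
      w.edges_subset_edgeSet (List.mem_toFinset.1 he)
  exact (hgirth.trans hlength).not_gt hH

-- The two walks live in the graph formed by their own edges, which is too small to contain a cycle.
theorem walk_eq_of_length_add_length_lt_egirth {x y : V} {P Q : G.Walk x y}
    (hP : P.edges.IsChain (· ≠ ·)) (hQ : Q.edges.IsChain (· ≠ ·))
    (hlen : ((P.length + Q.length : ℕ) : ℕ∞) < G.egirth) : P = Q := by
  classical
  let H : SimpleGraph V := SimpleGraph.fromEdgeSet {e | e ∈ P.edges ++ Q.edges}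
  have hmem : ∀ e ∈ P.edges ++ Q.edges, e ∈ G.edgeSet := fun e he =>
    (List.mem_append.1 he).elim (fun h => P.edges_subset_edgeSet h)
      (fun h => Q.edges_subset_edgeSet h)
  have hmemH : ∀ e ∈ P.edges ++ Q.edges, e ∈ H.edgeSet := fun e he => by
    rw [SimpleGraph.edgeSet_fromEdgeSet]
    exact ⟨he, G.not_isDiag_of_mem_edgeSet (hmem e he)⟩
  have hedges : H.edgeSet ⊆ {e | e ∈ P.edges ++ Q.edges} := by
    rw [SimpleGraph.edgeSet_fromEdgeSet]
    exact sdiff_subset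
  have hacyclic : H.IsAcyclic := by
    refine isAcyclic_of_encard_edgeSet_lt_egirth (G := G)
      (SimpleGraph.edgeSet_subset_edgeSet.1 fun e he => hmem e (hedges he)) (lt_of_le_of_lt ?_ hlen)
    calc H.edgeSet.encard
        ≤ ((P.edges ++ Q.edges).toFinset : Set (Sym2 V)).encard :=
          encard_le_encard fun e he => List.mem_toFinset.2 (hedges he)
      _ ≤ ((P.length + Q.length : ℕ) : ℕ∞) := by
          rw [encard_coe_eq_coe_finsetCard]
          exact_mod_cast (List.toFinset_card_le _).trans_eq (by simp)
  have hPH : ∀ e ∈ P.edges, e ∈ H.edgeSet := fun e he => hmemH e (List.mem_append_left _ he)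
  have hQH : ∀ e ∈ Q.edges, e ∈ H.edgeSet := fun e he => hmemH e (List.mem_append_right _ he)
  have hpaths : P.transfer H hPH = Q.transfer H hQH :=
    congrArg Subtype.val <| (hacyclic.subsingleton_path x y).elim
      ⟨_, (hacyclic.isPath_iff_isChain _).2 (by rwa [SimpleGraph.Walk.edges_transfer])⟩
      ⟨_, (hacyclic.isPath_iff_isChain _).2 (by rwa [SimpleGraph.Walk.edges_transfer])⟩
  refine SimpleGraph.Walk.ext_support ?_
  simpa only [SimpleGraph.Walk.support_transfer] using congrArg SimpleGraph.Walk.support hpaths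

/-- The branch of depth `l` at `v` seen from its neighbour `u`: the vertices reached from `v` by a
walk of length at most `l` which does not backtrack, not even over the edge `uv` leading to `v`. -/
def branch (G : SimpleGraph V) (l : ℕ) (u v : V) : Set V :=
  {x | ∃ (h : G.Adj u v) (P : G.Walk v x),
    P.length ≤ l ∧ (SimpleGraph.Walk.cons h P).edges.IsChain (· ≠ ·)}

theorem self_mem_branch (l : ℕ) {u v : V} (h : G.Adj u v) : v ∈ branch G l u v :=
  ⟨h, SimpleGraph.Walk.nil, Nat.zero_le l, List.isChain_singleton _⟩

theorem branch_mono {l L : ℕ} (hl : l ≤ L) (u v : V) : branch G l u v ⊆ branch G L u v :=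
  fun _ ⟨h, P, hP, hchain⟩ => ⟨h, P, hP.trans hl, hchain⟩

theorem branch_subset_branch_succ (l : ℕ) {u v w : V} (huv : G.Adj u v) (hw : w ≠ u) :
    branch G l v w ⊆ branch G (l + 1) u v := by
  rintro x ⟨hvw, P, hP, hchain⟩
  refine ⟨huv, SimpleGraph.Walk.cons hvw P, Nat.succ_le_succ hP, ?_⟩
  rw [SimpleGraph.Walk.edges_cons] at hchain
  rw [SimpleGraph.Walk.edges_cons, SimpleGraph.Walk.edges_cons, List.isChain_cons_cons]
  refine ⟨fun he => ?_, hchain⟩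
  rcases Sym2.eq_iff.1 he with ⟨huv', _⟩ | ⟨huw, _⟩
  · exact huv.ne huv'
  · exact hw huw.symm

theorem disjoint_branch {L : ℕ} (hL : ((2 * (L + 1) : ℕ) : ℕ∞) < G.egirth) {u v w : V}
    (hvw : v ≠ w) : Disjoint (branch G L u v) (branch G L u w) := by
  refine Set.disjoint_left.2 ?_
  rintro x ⟨huv, P, hP, hPchain⟩ ⟨huw, Q, hQ, hQchain⟩
  have hlen : (SimpleGraph.Walk.cons huv P).length + (SimpleGraph.Walk.cons huw Q).length
      ≤ 2 * (L + 1) := by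
    simp only [SimpleGraph.Walk.length_cons]
    omega
  have heq := walk_eq_of_length_add_length_lt_egirth hPchain hQchain
    ((Nat.cast_le.2 hlen).trans_lt hL)
  injection heq with _ hvw'
  exact hvw hvw'

theorem notMem_branch {L : ℕ} (hL : ((L + 1 : ℕ) : ℕ∞) < G.egirth) {u v : V} :
    u ∉ branch G L u v := by
  rintro ⟨huv, P, hP, hchain⟩
  have hlen : (SimpleGraph.Walk.cons huv P).length + (SimpleGraph.Walk.nil : G.Walk u u).length
      ≤ L + 1 := by
    simpa only [SimpleGraph.Walk.length_cons, SimpleGraph.Walk.length_nil] using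
      Nat.succ_le_succ hP
  cases walk_eq_of_length_add_length_lt_egirth hchain List.isChain_nil
    ((Nat.cast_le.2 hlen).trans_lt hL)

end Branches

section Cavity

variable {G : SimpleGraph V} {S : V → Set ℕ} {j k l : ℕ} {u v w : V}

theorem relevant_iff : Relevant G S j v ↔ (j = 0 ∧ 0 ∈ S v) ∨
    (j ∈ S v ∧ (∀ i < j, ¬ Relevant G S i v) ∧
      ∃! w, G.Adj v w ∧ ∃ i < j, Relevant G S i w) := by
  rw [Relevant, Nat.strongRecOn, WellFounded.fix_eq]
  simp only [exists_prop]
  rfl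

theorem RelevantLe.mono (hkl : k ≤ l) (hv : RelevantLe G S k v) : RelevantLe G S l v :=
  let ⟨i, hi, hrel⟩ := hv
  ⟨i, hi.trans hkl, hrel⟩

theorem relevantLe_zero : RelevantLe G S 0 v ↔ 0 ∈ S v := by
  simp only [RelevantLe, Nat.le_zero, exists_eq_left, relevant_iff (j := 0), true_and,
    or_iff_left_iff_imp]
  exact And.left

theorem relevantLe_succ : RelevantLe G S (l + 1) v ↔
    RelevantLe G S l v ∨ (l + 1 ∈ S v ∧ ∃! w, G.Adj v w ∧ RelevantLe G S l w) := by
  have hlast : RelevantLe G S (l + 1) v ↔ RelevantLe G S l v ∨ Relevant G S (l + 1) v := by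
    simp only [RelevantLe, Nat.le_succ_iff, or_and_right, exists_or, exists_eq_left]
  have hnew : Relevant G S (l + 1) v ↔
      l + 1 ∈ S v ∧ ¬ RelevantLe G S l v ∧ ∃! w, G.Adj v w ∧ RelevantLe G S l w := by
    rw [relevant_iff]
    simp only [RelevantLe, Nat.lt_succ_iff, Nat.succ_ne_zero, false_and, false_or, not_exists,
      not_and]
  rw [hlast, hnew]
  tauto

/-- The cavity version of `RelevantLe`: `v` becomes relevant by time `l` in the process where every
vertex ignores the neighbour through which it is reached, here `u` for `v`. On short time scales it
depends only on the branch at `v` seen from `u`, and as long as `u` is not relevant it agrees with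
`RelevantLe`. -/
def CavityLe (G : SimpleGraph V) (S : V → Set ℕ) : ℕ → V → V → Prop
  | 0, _, v => 0 ∈ S v
  | l + 1, u, v => CavityLe G S l u v ∨
      (l + 1 ∈ S v ∧ ∃! w, (G.Adj v w ∧ w ≠ u) ∧ CavityLe G S l v w)

/-- The cavity version of `Blue`: ignoring `u`, the vertex `v` is not relevant by time `l`, but
exactly one of its neighbours other than `u` is. -/
def CavityBlue (G : SimpleGraph V) (S : V → Set ℕ) (l : ℕ) (u v : V) : Prop :=
  ¬ CavityLe G S l u v ∧ ∃! w, (G.Adj v w ∧ w ≠ u) ∧ CavityLe G S l v w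

/-- In the cavity process ignoring `u`, the vertex `v` becomes relevant exactly at time `j`. -/
def CavityAt (G : SimpleGraph V) (S : V → Set ℕ) (j : ℕ) (u v : V) : Prop :=
  CavityLe G S j u v ∧ ∀ k < j, ¬ CavityLe G S k u v

theorem CavityLe.mono (hkl : k ≤ l) (hv : CavityLe G S k u v) : CavityLe G S l u v :=
  Nat.le_induction hv (fun _ _ => Or.inl) l hkl

theorem cavityLe_iff_zero_mem_or_exists : CavityLe G S l u v ↔ 0 ∈ S v ∨
    ∃ k < l, k + 1 ∈ S v ∧ ∃! w, (G.Adj v w ∧ w ≠ u) ∧ CavityLe G S k v w := by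
  induction l with
  | zero => simp only [CavityLe, Nat.not_lt_zero, false_and, exists_false, or_false]
  | succ l ih => rw [CavityLe, ih, Nat.exists_lt_succ_right, or_assoc]

theorem CavityAt.cavityLe_iff (h : CavityAt G S j u v) : CavityLe G S k u v ↔ j ≤ k :=
  ⟨fun hk => le_of_not_gt fun hlt => h.2 k hlt hk, fun hjk => h.1.mono hjk⟩

theorem CavityAt.eq (hj : CavityAt G S j u v) (hk : CavityAt G S k u v) : j = k :=
  le_antisymm (hj.cavityLe_iff.1 hk.1) (hk.cavityLe_iff.1 hj.1)

theorem cavityLe_iff_exists_cavityAt : CavityLe G S l u v ↔ ∃ j ≤ l, CavityAt G S j u v := by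
  classical
  refine ⟨fun h => ?_, fun ⟨j, hj, h⟩ => h.1.mono hj⟩
  have hex : ∃ j, CavityLe G S j u v := ⟨l, h⟩
  exact ⟨Nat.find hex, Nat.find_min' hex h, Nat.find_spec hex, fun _ => Nat.find_min hex⟩

theorem cavityAt_zero : CavityAt G S 0 u v ↔ 0 ∈ S v := by
  simp only [CavityAt, CavityLe, Nat.not_lt_zero, false_imp_iff, forall_const, and_true]

theorem cavityAt_succ_iff_not_cavityLe :
    CavityAt G S (j + 1) u v ↔ CavityLe G S (j + 1) u v ∧ ¬ CavityLe G S j u v :=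
  and_congr_right fun _ => ⟨fun h => h j j.lt_succ_self,
    fun h _ hk hc => h (hc.mono (Nat.lt_succ_iff.1 hk))⟩

theorem cavityAt_succ : CavityAt G S (j + 1) u v ↔ j + 1 ∈ S v ∧ CavityBlue G S j u v := by
  rw [cavityAt_succ_iff_not_cavityLe, CavityLe, CavityBlue]
  tauto

theorem existsUnique_and_iff {α : Type*} {P Q : α → Prop} :
    (∃! x, P x ∧ Q x) ↔ ∃ x, P x ∧ Q x ∧ ∀ y, y ≠ x → P y → ¬ Q y := by
  constructor
  · rintro ⟨x, ⟨hP, hQ⟩, huniq⟩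
    exact ⟨x, hP, hQ, fun y hne hPy hQy => hne (huniq y ⟨hPy, hQy⟩)⟩
  · rintro ⟨x, hP, hQ, hother⟩
    exact ⟨x, ⟨hP, hQ⟩, fun y ⟨hPy, hQy⟩ => by_contra fun hne => hother y hne hPy hQy⟩

-- The neighbour `w` activates `v` at the first time after `j` whose label `v` carries.
theorem CavityAt.not_cavityLe_iff (hj : CavityAt G S j v w) (hw : G.Adj v w ∧ w ≠ u)
    (hother : ∀ y, y ≠ w → G.Adj v y ∧ y ≠ u → ¬ CavityLe G S l v y) :
    ¬ CavityLe G S l u v ↔ ∀ k ∈ insert 0 (Finset.Ioc j l), k ∉ S v := by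
  have hactive : ∀ k < l,
      (∃! y, (G.Adj v y ∧ y ≠ u) ∧ CavityLe G S k v y) ↔ j ≤ k := by
    intro k hk
    rw [← hj.cavityLe_iff, existsUnique_and_iff]
    constructor
    · rintro ⟨y, hy, hyk, -⟩
      by_contra hwk
      exact hother y (fun h => hwk (h ▸ hyk)) hy (hyk.mono hk.le)
    · exact fun hwk => ⟨w, hw, hwk, fun y hne hy hyk => hother y hne hy (hyk.mono hk.le)⟩
  rw [cavityLe_iff_zero_mem_or_exists, not_or, Finset.forall_mem_insert]
  refine and_congr_right fun _ => ⟨fun h k hk hkS => ?_, ?_⟩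
  · obtain ⟨hjk, hkl⟩ := Finset.mem_Ioc.1 hk
    obtain ⟨k, rfl⟩ := Nat.exists_eq_add_of_le' (Nat.one_le_of_lt hjk)
    exact h ⟨k, hkl, hkS, (hactive k hkl).2 (Nat.lt_succ_iff.1 hjk)⟩
  · rintro h ⟨k, hk, hkS, huniq⟩
    exact h (k + 1)
      (Finset.mem_Ioc.2 ⟨Nat.lt_succ_iff.2 ((hactive k hk).1 huniq), hk⟩) hkS

theorem cavityBlue_iff : CavityBlue G S l u v ↔ ∃ j ≤ l, ∃ w, (G.Adj v w ∧ w ≠ u) ∧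
    (∀ k ∈ insert 0 (Finset.Ioc j l), k ∉ S v) ∧ CavityAt G S j v w ∧
      ∀ y, y ≠ w → G.Adj v y ∧ y ≠ u → ¬ CavityLe G S l v y := by
  rw [CavityBlue, existsUnique_and_iff]
  constructor
  · rintro ⟨hv, w, hw, hwl, hother⟩
    obtain ⟨j, hjl, hj⟩ := cavityLe_iff_exists_cavityAt.1 hwl
    exact ⟨j, hjl, w, hw, (hj.not_cavityLe_iff hw hother).1 hv, hj, hother⟩
  · rintro ⟨j, hjl, w, hw, hmiss, hj, hother⟩
    exact ⟨(hj.not_cavityLe_iff hw hother).2 hmiss, w, hw, hj.1.mono hjl, hother⟩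

theorem existsUnique_adj_relevantLe_iff (hu : ¬ RelevantLe G S l u)
    (hv : ∀ w, RelevantLe G S l w ↔ CavityLe G S l v w) :
    (∃! w, G.Adj v w ∧ RelevantLe G S l w) ↔
      ∃! w, (G.Adj v w ∧ w ≠ u) ∧ CavityLe G S l v w := by
  refine existsUnique_congr fun w => ?_
  rw [and_assoc, ← hv w]
  exact and_congr_right fun _ => ⟨fun h => ⟨fun hwu => hu (hwu ▸ h), h⟩, And.right⟩

theorem relevantLe_iff_cavityLe (hu : ∀ k < l, ¬ RelevantLe G S k u) :
    RelevantLe G S l v ↔ CavityLe G S l u v := by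
  induction l generalizing u v with
  | zero => exact relevantLe_zero
  | succ l ih =>
    have hl : RelevantLe G S l v ↔ CavityLe G S l u v :=
      ih fun k hk => hu k (hk.trans l.lt_succ_self)
    rw [relevantLe_succ, CavityLe, ← hl]
    refine or_congr_right' fun hv => and_congr_right fun _ =>
      existsUnique_adj_relevantLe_iff (hu l l.lt_succ_self) fun w =>
        ih fun k hk hr => hv (hr.mono hk.le)

theorem notMem_of_not_relevantLe (hu : ¬ RelevantLe G S l u) : 0 ∉ S u :=
  fun h => hu ((relevantLe_zero.2 h).mono l.zero_le)

theorem mem_white_iff : u ∈ White G S l ↔ 0 ∉ S u ∧ ∀ v, G.Adj u v → ¬ CavityLe G S l u v := by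
  constructor
  · rintro ⟨hu, hnbr⟩
    refine ⟨notMem_of_not_relevantLe hu, fun v huv hv => hnbr v huv ?_⟩
    exact (relevantLe_iff_cavityLe fun k hk hr => hu (hr.mono hk.le)).2 hv
  · rintro ⟨hzero, hnbr⟩
    have hu : ∀ k ≤ l, ¬ RelevantLe G S k u := by
      intro k
      induction k with
      | zero => exact fun _ => relevantLe_zero.not.2 hzero
      | succ k ih =>
        intro hk hrel
        have huk : ¬ RelevantLe G S k u := ih (k.le_succ.trans hk)
        rcases relevantLe_succ.1 hrel with hr | ⟨_, v, ⟨huv, hv⟩, _⟩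
        · exact huk hr
        · have hv' := (relevantLe_iff_cavityLe fun i hi hr => huk (hr.mono hi.le)).1 hv
          exact hnbr v huv (hv'.mono (k.le_succ.trans hk))
    refine ⟨hu l le_rfl, fun v huv hv => hnbr v huv ?_⟩
    exact (relevantLe_iff_cavityLe fun k hk => hu k hk.le).1 hv

theorem white_antitone (hkl : k ≤ l) : White G S l ⊆ White G S k := by
  intro u hu
  rw [mem_white_iff] at hu ⊢
  exact ⟨hu.1, fun v huv hv => hu.2 v huv (hv.mono hkl)⟩

theorem mem_blue_iff_of_adj_white (huv : G.Adj u v) (hu : u ∈ White G S l) :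
    v ∈ Blue G S l ↔ CavityBlue G S l u v := by
  have hv : RelevantLe G S l v ↔ CavityLe G S l u v :=
    relevantLe_iff_cavityLe fun k hk hr => hu.1 (hr.mono hk.le)
  refine and_congr hv.not (existsUnique_adj_relevantLe_iff hu.1 fun w => ?_)
  exact relevantLe_iff_cavityLe fun k hk hr => hu.2 v huv (hr.mono hk.le)

theorem blue_and_white_iff (huv : G.Adj u v) : (v ∈ Blue G S l ∧ u ∈ White G S l) ↔
    0 ∉ S u ∧ CavityBlue G S l u v ∧ ∀ w, w ≠ v → G.Adj u w → ¬ CavityLe G S l u w := by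
  rw [and_comm, and_congr_right (mem_blue_iff_of_adj_white huv), mem_white_iff]
  constructor
  · rintro ⟨⟨hzero, hnbr⟩, hv⟩
    exact ⟨hzero, hv, fun w _ => hnbr w⟩
  · rintro ⟨hzero, hv, hother⟩
    refine ⟨⟨hzero, fun w huw => ?_⟩, hv⟩
    obtain rfl | hne := eq_or_ne w v
    exacts [hv.1, hother w hne huw]

theorem mem_blue_succ_iff_of_white (hu : u ∈ White G S l) :
    u ∈ Blue G S (l + 1) ↔ ∃! v, G.Adj u v ∧ CavityLe G S (l + 1) u v := by
  have hsucc : ¬ RelevantLe G S (l + 1) u := fun h => (relevantLe_succ.1 h).elim hu.1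
    fun ⟨_, v, ⟨huv, hv⟩, _⟩ => hu.2 v huv hv
  have hnbr : ∀ v, RelevantLe G S (l + 1) v ↔ CavityLe G S (l + 1) u v := fun v =>
    relevantLe_iff_cavityLe fun k hk hr => hu.1 (hr.mono (Nat.lt_succ_iff.1 hk))
  refine (and_iff_right hsucc).trans (existsUnique_congr fun v => ?_)
  rw [hnbr v]

theorem white_and_blue_succ_iff : (u ∈ White G S l ∧ u ∈ Blue G S (l + 1)) ↔
    ∃ v, G.Adj u v ∧ 0 ∉ S u ∧ CavityAt G S (l + 1) u v ∧
      ∀ w, w ≠ v → G.Adj u w → ¬ CavityLe G S (l + 1) u w := by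
  rw [and_congr_right mem_blue_succ_iff_of_white, existsUnique_and_iff, mem_white_iff]
  constructor
  · rintro ⟨⟨hzero, hnbr⟩, v, huv, hv, hother⟩
    exact ⟨v, huv, hzero, cavityAt_succ_iff_not_cavityLe.2 ⟨hv, hnbr v huv⟩, hother⟩
  · rintro ⟨v, huv, hzero, hv, hother⟩
    refine ⟨⟨hzero, fun w huw hw => ?_⟩, v, huv, hv.1, hother⟩
    obtain rfl | hne := eq_or_ne w v
    exacts [hv.2 l l.lt_succ_self hw, hother w hne huw (hw.mono l.le_succ)]

end Cavity

section Independence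

variable {Ω ι κ : Type*} {mΩ : MeasurableSpace Ω} {μ : Measure Ω} {s : ι → Set Ω}

theorem measureReal_inter_of_disjoint_blocks (hs : ∀ i, MeasurableSet (s i)) (hμ : iIndepSet s μ)
    {A B : Set ι} (hAB : Disjoint A B) {E F : Set Ω}
    (hE : MeasurableSet[MeasurableSpace.generateFrom (s '' A)] E)
    (hF : MeasurableSet[MeasurableSpace.generateFrom (s '' B)] F) :
    μ.real (E ∩ F) = μ.real E * μ.real F := by
  have hindep := (Indep_iff _ _ μ).1 (hμ.indep_generateFrom_of_disjoint hs A B hAB) E F hE hF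
  rw [measureReal_def, hindep, ENNReal.toReal_mul, measureReal_def, measureReal_def]

theorem measurableSet_biInter_of_blocks {A : κ → Set ι} {E : κ → Set Ω} (N : Finset κ)
    (hE : ∀ k ∈ N, MeasurableSet[MeasurableSpace.generateFrom (s '' A k)] (E k)) :
    MeasurableSet[MeasurableSpace.generateFrom (s '' ⋃ k ∈ N, A k)] (⋂ k ∈ N, E k) :=
  N.measurableSet_biInter fun k hk => MeasurableSpace.generateFrom_mono
    (image_mono (subset_biUnion_of_mem hk)) _ (hE k hk)

theorem measureReal_biInter_of_disjoint_blocks (hs : ∀ i, MeasurableSet (s i))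
    (hμ : iIndepSet s μ) {A : κ → Set ι} {E : κ → Set Ω} {N : Finset κ}
    (hA : (N : Set κ).PairwiseDisjoint A)
    (hE : ∀ k ∈ N, MeasurableSet[MeasurableSpace.generateFrom (s '' A k)] (E k)) :
    μ.real (⋂ k ∈ N, E k) = ∏ k ∈ N, μ.real (E k) := by
  classical
  have := hμ.isProbabilityMeasure
  induction N using Finset.induction_on with
  | empty => simp
  | insert a N ha ih =>
    rw [Finset.coe_insert, pairwiseDisjoint_insert_of_notMem (by exact_mod_cast ha)] at hA
    rw [Finset.forall_mem_insert] at hE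
    rw [Finset.set_biInter_insert, Finset.prod_insert ha, ← ih hA.1 hE.2]
    exact measureReal_inter_of_disjoint_blocks hs hμ (disjoint_iUnion₂_right.2 hA.2) hE.1
      (measurableSet_biInter_of_blocks N hE.2)

end Independence

section Labels

variable {μ : Measure (V → ℕ → Bool)} {p₀ p : ℝ}

/-- The event that the vertex `q.1` carries the label `q.2`. -/
def LabelEv (q : V × ℕ) : Set (V → ℕ → Bool) :=
  {ω | ω q.1 q.2 = true}

/-- The event that the vertex `v` carries none of the labels in `K`. -/
def MissEv (K : Finset ℕ) (v : V) : Set (V → ℕ → Bool) :=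
  {ω | ∀ k ∈ K, k ∉ labels ω v}

/-- The events that depend only on which labels `q.2` are carried by which vertices `q.1`, for
`q ∈ A`. -/
abbrev labelSigma (A : Set (V × ℕ)) : MeasurableSpace (V → ℕ → Bool) :=
  MeasurableSpace.generateFrom (LabelEv '' A)

theorem measurableSet_labelEv (q : V × ℕ) : MeasurableSet (LabelEv q) :=
  (by fun_prop : Measurable fun ω : V → ℕ → Bool => ω q.1 q.2) (MeasurableSet.singleton true)

theorem measurableSet_labelSigma_labelEv {A : Set (V × ℕ)} {q : V × ℕ} (hq : q ∈ A) :
    MeasurableSet[labelSigma A] (LabelEv q) :=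
  MeasurableSpace.measurableSet_generateFrom (mem_image_of_mem _ hq)

theorem labelSigma_mono {A B : Set (V × ℕ)} (hAB : A ⊆ B) : labelSigma A ≤ labelSigma B :=
  MeasurableSpace.generateFrom_mono (image_mono hAB)

theorem labelSigma_le (A : Set (V × ℕ)) : labelSigma A ≤ MeasurableSpace.pi :=
  MeasurableSpace.generateFrom_le (forall_mem_image.2 fun q _ => measurableSet_labelEv q)

theorem missEv_eq_biInter (K : Finset ℕ) (v : V) : MissEv K v = ⋂ k ∈ K, (LabelEv (v, k))ᶜ := by
  ext ω
  simp only [MissEv, labels, LabelEv, mem_ofPred_eq, mem_iInter, mem_compl_iff]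

theorem measurableSet_labelSigma_missEv (K : Finset ℕ) (v : V) :
    MeasurableSet[labelSigma ({v} ×ˢ univ)] (MissEv K v) := by
  rw [missEv_eq_biInter]
  exact K.measurableSet_biInter fun k _ =>
    (measurableSet_labelSigma_labelEv (mk_mem_prod (mem_singleton v) (mem_univ k))).compl

theorem measureReal_labelEv (hμ : IsLabelMeasure μ p₀ p) (hp₀ : 0 ≤ p₀) (hp : 0 ≤ p) (v : V)
    (k : ℕ) : μ.real (LabelEv (v, k)) = if k = 0 then p₀ else p := by
  rw [measureReal_def, LabelEv, hμ.2.2 v k, ENNReal.toReal_ofReal]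
  split_ifs <;> assumption

theorem measureReal_missEv (hμ : IsLabelMeasure μ p₀ p) (hp₀ : 0 ≤ p₀) (hp : 0 ≤ p)
    (K : Finset ℕ) (v : V) : μ.real (MissEv K v) = ∏ k ∈ K, (1 - if k = 0 then p₀ else p) := by
  have := hμ.1
  have hdisj : (K : Set ℕ).PairwiseDisjoint fun k => {(v, k)} := fun i _ j _ hij =>
    disjoint_singleton.2 fun h => hij (congrArg Prod.snd h)
  rw [missEv_eq_biInter, measureReal_biInter_of_disjoint_blocks measurableSet_labelEv hμ.2.1 hdisj
    fun k _ => (measurableSet_labelSigma_labelEv (mem_singleton _)).compl]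
  refine Finset.prod_congr rfl fun k _ => ?_
  rw [probReal_compl_eq_one_sub (measurableSet_labelEv _), measureReal_labelEv hμ hp₀ hp]

theorem measureReal_missEv_zero (hμ : IsLabelMeasure μ p₀ p) (hp₀ : 0 ≤ p₀) (hp : 0 ≤ p) (v : V) :
    μ.real (MissEv {0} v) = 1 - p₀ := by
  rw [measureReal_missEv hμ hp₀ hp, Finset.prod_singleton, if_pos rfl]

end Labels

section CavityEvents

variable {G : SimpleGraph V} {l L : ℕ} {u v : V}

/-- The event `CavityLe`. -/
def CavityLeEv (G : SimpleGraph V) (l : ℕ) (u v : V) : Set (V → ℕ → Bool) :=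
  {ω | CavityLe G (labels ω) l u v}

/-- The event `CavityBlue`. -/
def CavityBlueEv (G : SimpleGraph V) (l : ℕ) (u v : V) : Set (V → ℕ → Bool) :=
  {ω | CavityBlue G (labels ω) l u v}

/-- The event `CavityAt`. -/
def CavityAtEv (G : SimpleGraph V) (j : ℕ) (u v : V) : Set (V → ℕ → Bool) :=
  {ω | CavityAt G (labels ω) j u v}

theorem cavityAtEv_zero : CavityAtEv G 0 u v = LabelEv (v, 0) :=
  Set.ext fun _ => cavityAt_zero

theorem cavityAtEv_succ : CavityAtEv G (l + 1) u v = LabelEv (v, l + 1) ∩ CavityBlueEv G l u v :=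
  Set.ext fun _ => cavityAt_succ

theorem measurableSet_existsUnique_and {Ω α : Type*} {m : MeasurableSpace Ω} {P : α → Prop}
    (hP : {a | P a}.Finite) {E : α → Set Ω} (hE : ∀ a, P a → MeasurableSet (E a)) :
    MeasurableSet {ω | ∃! a, P a ∧ ω ∈ E a} := by
  have hset : {ω | ∃! a, P a ∧ ω ∈ E a} =
      ⋃ a ∈ {a | P a}, E a ∩ ⋂ b ∈ {b | P b ∧ b ≠ a}, (E b)ᶜ := by
    ext ω
    simp only [existsUnique_and_iff, mem_iUnion, mem_inter_iff, mem_iInter, mem_ofPred_eq,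
      mem_compl_iff, exists_prop, and_imp]
    grind
  rw [hset]
  exact hP.measurableSet_biUnion fun a ha => (hE a ha).inter <|
    (hP.subset fun b hb => hb.1).measurableSet_biInter fun b hb => (hE b hb.1).compl

variable [G.LocallyFinite]

theorem measurableSet_existsUnique_cavityLe (huv : G.Adj u v)
    (hle : ∀ w, G.Adj v w → MeasurableSet[labelSigma (branch G l v w ×ˢ Iic l)]
      (CavityLeEv G l v w)) :
    MeasurableSet[labelSigma (branch G (l + 1) u v ×ˢ Iic l)]
      {ω | ∃! w, (G.Adj v w ∧ w ≠ u) ∧ CavityLe G (labels ω) l v w} :=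
  measurableSet_existsUnique_and (E := CavityLeEv G l v)
    ((G.neighborSet v).toFinite.subset fun _ => And.left) fun w hw =>
      labelSigma_mono (prod_mono (branch_subset_branch_succ l huv hw.2) Subset.rfl) _ (hle w hw.1)

theorem measurableSet_labelSigma_cavityLeEv (huv : G.Adj u v) :
    MeasurableSet[labelSigma (branch G l u v ×ˢ Iic l)] (CavityLeEv G l u v) := by
  induction l generalizing u v with
  | zero =>
    exact measurableSet_labelSigma_labelEv (q := (v, 0)) ⟨self_mem_branch 0 huv, mem_Iic.2 le_rfl⟩
  | succ l ih =>
    have hset : CavityLeEv G (l + 1) u v = CavityLeEv G l u v ∪ (LabelEv (v, l + 1) ∩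
        {ω | ∃! w, (G.Adj v w ∧ w ≠ u) ∧ CavityLe G (labels ω) l v w}) := rfl
    have hIic : Iic l ⊆ Iic (l + 1) := Iic_subset_Iic.2 l.le_succ
    rw [hset]
    refine .union ?_ (.inter ?_ ?_)
    · exact labelSigma_mono (prod_mono (branch_mono l.le_succ u v) hIic) _ (ih huv)
    · exact measurableSet_labelSigma_labelEv ⟨self_mem_branch _ huv, mem_Iic.2 le_rfl⟩
    · exact labelSigma_mono (prod_mono Subset.rfl hIic) _
        (measurableSet_existsUnique_cavityLe huv fun w => ih)

theorem measurableSet_labelSigma_cavityBlueEv (huv : G.Adj u v) :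
    MeasurableSet[labelSigma (branch G (l + 1) u v ×ˢ Iic l)] (CavityBlueEv G l u v) :=
  .inter (.compl <| labelSigma_mono (prod_mono (branch_mono l.le_succ u v) Subset.rfl) _
      (measurableSet_labelSigma_cavityLeEv huv))
    (measurableSet_existsUnique_cavityLe huv fun _ => measurableSet_labelSigma_cavityLeEv)

theorem measurableSet_branch_cavityLeEv (hl : l ≤ L) (huv : G.Adj u v) :
    MeasurableSet[labelSigma (branch G L u v ×ˢ univ)] (CavityLeEv G l u v) :=
  labelSigma_mono (prod_mono (branch_mono hl u v) (subset_univ _)) _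
    (measurableSet_labelSigma_cavityLeEv huv)

theorem measurableSet_branch_cavityBlueEv (hl : l < L) (huv : G.Adj u v) :
    MeasurableSet[labelSigma (branch G L u v ×ˢ univ)] (CavityBlueEv G l u v) :=
  labelSigma_mono (prod_mono (branch_mono hl u v) (subset_univ _)) _
    (measurableSet_labelSigma_cavityBlueEv huv)

theorem measurableSet_branch_cavityAtEv (hl : l ≤ L) (huv : G.Adj u v) :
    MeasurableSet[labelSigma (branch G L u v ×ˢ univ)] (CavityAtEv G l u v) := by
  have hlabel : MeasurableSet[labelSigma (branch G L u v ×ˢ univ)] (LabelEv (v, l)) :=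
    measurableSet_labelSigma_labelEv ⟨self_mem_branch L huv, mem_univ l⟩
  cases l with
  | zero => rwa [cavityAtEv_zero]
  | succ l =>
    rw [cavityAtEv_succ]
    exact hlabel.inter (measurableSet_branch_cavityBlueEv hl huv)

theorem measurableSet_cavityLeEv (huv : G.Adj u v) : MeasurableSet (CavityLeEv G l u v) :=
  labelSigma_le _ _ (measurableSet_labelSigma_cavityLeEv huv)

theorem measurableSet_cavityAtEv (huv : G.Adj u v) : MeasurableSet (CavityAtEv G l u v) :=
  labelSigma_le _ _ (measurableSet_branch_cavityAtEv le_rfl huv)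

variable {μ : Measure (V → ℕ → Bool)} {p₀ p : ℝ}

theorem measureReal_cavityAtEv_succ (hμ : IsLabelMeasure μ p₀ p) (hp₀ : 0 ≤ p₀) (hp : 0 ≤ p)
    (huv : G.Adj u v) :
    μ.real (CavityAtEv G (l + 1) u v) = p * μ.real (CavityBlueEv G l u v) := by
  have hdisj : Disjoint {(v, l + 1)} (branch G (l + 1) u v ×ˢ Iic l) :=
    disjoint_singleton_left.2 fun h => l.not_succ_le_self h.2
  rw [cavityAtEv_succ, measureReal_inter_of_disjoint_blocks measurableSet_labelEv hμ.2.1 hdisj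
    (measurableSet_labelSigma_labelEv rfl) (measurableSet_labelSigma_cavityBlueEv huv),
    measureReal_labelEv hμ hp₀ hp, if_neg l.succ_ne_zero]

theorem measureReal_cavityLeEv [IsFiniteMeasure μ] (huv : G.Adj u v) :
    μ.real (CavityLeEv G l u v) = ∑ j ∈ Finset.range (l + 1), μ.real (CavityAtEv G j u v) := by
  have hset : CavityLeEv G l u v = ⋃ j ∈ Finset.range (l + 1), CavityAtEv G j u v := by
    ext ω
    simp only [CavityLeEv, CavityAtEv, mem_ofPred_eq, mem_iUnion, exists_prop, Finset.mem_range,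
      Nat.lt_succ_iff, cavityLe_iff_exists_cavityAt]
  rw [hset, measureReal_biUnion_finset]
  · exact fun j _ k _ hjk => Set.disjoint_left.2 fun ω hj hk => hjk (hj.eq hk)
  · exact fun j _ => measurableSet_cavityAtEv huv

theorem measureReal_cavityLeEv_succ (hμ : IsLabelMeasure μ p₀ p) (hp₀ : 0 ≤ p₀) (hp : 0 ≤ p)
    (huv : G.Adj u v) : μ.real (CavityLeEv G (l + 1) u v) =
      μ.real (CavityLeEv G l u v) + p * μ.real (CavityBlueEv G l u v) := by
  have := hμ.1
  rw [measureReal_cavityLeEv huv, Finset.sum_range_succ, ← measureReal_cavityLeEv huv,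
    measureReal_cavityAtEv_succ hμ hp₀ hp huv]

end CavityEvents

section Star

variable {G : SimpleGraph V} {μ : Measure (V → ℕ → Bool)} {p₀ p : ℝ} {l L : ℕ} {u v : V}
  {N : Finset V} {x : ℝ}

theorem measureReal_inter_biInter_branch (hμ : IsLabelMeasure μ p₀ p)
    (hL : ((2 * (L + 1) : ℕ) : ℕ∞) < G.egirth) {A : Set (V → ℕ → Bool)}
    {E : V → Set (V → ℕ → Bool)} (hA : MeasurableSet[labelSigma ({u} ×ˢ univ)] A)
    (hE : ∀ v ∈ N, MeasurableSet[labelSigma (branch G L u v ×ˢ univ)] (E v)) :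
    μ.real (A ∩ ⋂ v ∈ N, E v) = μ.real A * ∏ v ∈ N, μ.real (E v) := by
  have hu : ((L + 1 : ℕ) : ℕ∞) < G.egirth := (Nat.cast_le.2 (by omega)).trans_lt hL
  rw [← measureReal_biInter_of_disjoint_blocks measurableSet_labelEv hμ.2.1
    (fun v _ w _ hvw => disjoint_prod.2 (Or.inl (disjoint_branch hL hvw))) hE]
  refine measureReal_inter_of_disjoint_blocks measurableSet_labelEv hμ.2.1 ?_ hA
    (measurableSet_biInter_of_blocks N hE)
  exact disjoint_iUnion₂_right.2 fun v _ =>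
    disjoint_prod.2 (Or.inl (disjoint_singleton_left.2 (notMem_branch hu)))

variable [DecidableEq V]

/-- The event that `u` carries none of the labels in `K`, that `X` occurs, and that, ignoring `u`,
no vertex of `N` other than `v` is relevant by time `l`. It is used for events `X` which depend only
on the branch at `v` seen from `u`. -/
def SoleEv (G : SimpleGraph V) (K : Finset ℕ) (N : Finset V) (l : ℕ)
    (u v : V) (X : Set (V → ℕ → Bool)) : Set (V → ℕ → Bool) :=
  MissEv K u ∩ (X ∩ ⋂ w ∈ N.erase v, (CavityLeEv G l u w)ᶜ)

theorem pairwiseDisjoint_soleEv {J : Finset ℕ} (hJ : ∀ j ∈ J, j ≤ l) (K : ℕ → Finset ℕ) :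
    ((J ×ˢ N : Finset (ℕ × V)) : Set (ℕ × V)).PairwiseDisjoint fun q =>
      SoleEv G (K q.1) N l u q.2 (CavityAtEv G q.1 u q.2) := by
  rintro ⟨j, v⟩ hjv ⟨k, w⟩ - hne
  obtain ⟨hj, hv⟩ := Finset.mem_product.1 hjv
  refine Set.disjoint_left.2 ?_
  rintro ω ⟨-, hvj, -⟩ ⟨-, hwk, hother⟩
  obtain rfl | hvw := eq_or_ne v w
  · exact hne (congrArg (·, v) (hvj.eq hwk))
  · exact mem_iInter₂.1 hother v (Finset.mem_erase.2 ⟨hvw, hv⟩) (hvj.1.mono (hJ j hj))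

theorem cavityBlueEv_eq_biUnion_soleEv (hN : ∀ w, w ∈ N ↔ G.Adj v w ∧ w ≠ u) :
    CavityBlueEv G l u v = ⋃ q ∈ Finset.range (l + 1) ×ˢ N,
      SoleEv G (insert 0 (Finset.Ioc q.1 l)) N l v q.2 (CavityAtEv G q.1 v q.2) := by
  ext ω
  simp only [CavityBlueEv, mem_ofPred_eq, cavityBlue_iff, mem_iUnion, exists_prop, Prod.exists,
    Finset.mem_product, Finset.mem_range, Nat.lt_succ_iff, hN, SoleEv, MissEv, CavityAtEv,
    CavityLeEv, mem_inter_iff, mem_iInter, Finset.mem_erase, mem_compl_iff, and_assoc, and_imp]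
  grind

variable [G.LocallyFinite]

theorem measurableSet_soleEv {K : Finset ℕ} {X : Set (V → ℕ → Bool)} (hN : ∀ w ∈ N, G.Adj u w)
    (hX : MeasurableSet X) : MeasurableSet (SoleEv G K N l u v X) :=
  (labelSigma_le _ _ (measurableSet_labelSigma_missEv K u)).inter <| hX.inter <|
    (N.erase v).measurableSet_biInter fun w hw =>
      (measurableSet_cavityLeEv (hN w (Finset.mem_of_mem_erase hw))).compl

theorem measureReal_soleEv (hμ : IsLabelMeasure μ p₀ p)
    (hL : ((2 * (L + 1) : ℕ) : ℕ∞) < G.egirth) (hl : l ≤ L) (hN : ∀ w ∈ N, G.Adj u w)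
    (hx : ∀ w ∈ N, μ.real (CavityLeEv G l u w) = x) (hv : v ∈ N) {K : Finset ℕ}
    {X : Set (V → ℕ → Bool)} (hX : MeasurableSet[labelSigma (branch G L u v ×ˢ univ)] X) :
    μ.real (SoleEv G K N l u v X) =
      μ.real (MissEv K u) * (μ.real X * (1 - x) ^ (N.card - 1)) := by
  have := hμ.1
  let E : V → Set (V → ℕ → Bool) := Function.update (fun w => (CavityLeEv G l u w)ᶜ) v X
  have hEv : E v = X := Function.update_self ..
  have hEne : ∀ w ≠ v, E w = (CavityLeEv G l u w)ᶜ := fun w hne => Function.update_of_ne hne ..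
  have hE : ∀ w ∈ N, MeasurableSet[labelSigma (branch G L u w ×ˢ univ)] (E w) := by
    intro w hw
    obtain rfl | hne := eq_or_ne w v
    · rwa [hEv]
    · rw [hEne w hne]
      exact (measurableSet_branch_cavityLeEv hl (hN w hw)).compl
  have hset : SoleEv G K N l u v X = MissEv K u ∩ ⋂ w ∈ N, E w := by
    rw [SoleEv, ← Finset.set_biInter_insert_update _ (Finset.notMem_erase v N),
      Finset.insert_erase hv]
  have hother : ∀ w ∈ N.erase v, μ.real (E w) = 1 - x := by
    intro w hw
    obtain ⟨hne, hw⟩ := Finset.mem_erase.1 hw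
    rw [hEne w hne, probReal_compl_eq_one_sub (measurableSet_cavityLeEv (hN w hw)),
      hx w hw]
  rw [hset, measureReal_inter_biInter_branch hμ hL (measurableSet_labelSigma_missEv K u) hE,
    ← Finset.mul_prod_erase N _ hv, Finset.prod_eq_pow_card hother, Finset.card_erase_of_mem hv,
    hEv]

theorem measureReal_biUnion_soleEv (hμ : IsLabelMeasure μ p₀ p)
    (hl : ((2 * (l + 1) : ℕ) : ℕ∞) < G.egirth) (hN : ∀ w ∈ N, G.Adj u w)
    (hx : ∀ w ∈ N, μ.real (CavityLeEv G l u w) = x) {J : Finset ℕ} (hJ : ∀ j ∈ J, j ≤ l)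
    (K : ℕ → Finset ℕ) {f : ℕ → ℝ} (hf : ∀ j ∈ J, ∀ w ∈ N, μ.real (CavityAtEv G j u w) = f j) :
    μ.real (⋃ q ∈ J ×ˢ N, SoleEv G (K q.1) N l u q.2 (CavityAtEv G q.1 u q.2)) =
      ∑ j ∈ J, N.card * (μ.real (MissEv (K j) u) * (f j * (1 - x) ^ (N.card - 1))) := by
  have := hμ.1
  rw [measureReal_biUnion_finset (pairwiseDisjoint_soleEv hJ K), Finset.sum_product]
  · refine Finset.sum_congr rfl fun j hj => ?_
    rw [← nsmul_eq_mul]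
    refine Finset.sum_eq_card_nsmul fun w hw => ?_
    rw [measureReal_soleEv hμ hl le_rfl hN hx hw (measurableSet_branch_cavityAtEv (hJ j hj)
      (hN w hw)), hf j hj w hw]
  · rintro ⟨j, w⟩ hq
    exact measurableSet_soleEv hN (measurableSet_cavityAtEv (hN w (Finset.mem_product.1 hq).2))

end Star

section Homogeneity

variable {G : SimpleGraph V} [G.LocallyFinite] {μ : Measure (V → ℕ → Bool)} {p₀ p : ℝ} {r l : ℕ}
  {u v a b : V}

theorem measureReal_cavityBlueEv (hμ : IsLabelMeasure μ p₀ p) (hp₀ : 0 ≤ p₀) (hp : 0 ≤ p)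
    (hreg : G.IsRegularOfDegree r) (hl : ((2 * (l + 1) : ℕ) : ℕ∞) < G.egirth) {f : ℕ → ℝ}
    (hf : ∀ j ≤ l, ∀ w, G.Adj v w → μ.real (CavityAtEv G j v w) = f j) (huv : G.Adj u v) :
    μ.real (CavityBlueEv G l u v) = ∑ j ∈ Finset.range (l + 1),
      (r - 1 : ℕ) * ((∏ k ∈ insert 0 (Finset.Ioc j l), (1 - if k = 0 then p₀ else p)) *
        (f j * (1 - ∑ k ∈ Finset.range (l + 1), f k) ^ (r - 1 - 1))) := by
  classical
  have := hμ.1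
  have hmem : ∀ w, w ∈ (G.neighborFinset v).erase u ↔ G.Adj v w ∧ w ≠ u := fun w => by
    rw [Finset.mem_erase, SimpleGraph.mem_neighborFinset, and_comm]
  have hcard : ((G.neighborFinset v).erase u).card = r - 1 := by
    rw [Finset.card_erase_of_mem ((G.mem_neighborFinset v u).2 huv.symm),
      SimpleGraph.card_neighborFinset_eq_degree, hreg v]
  have hrange : ∀ j ∈ Finset.range (l + 1), j ≤ l := fun j hj =>
    Nat.lt_succ_iff.1 (Finset.mem_range.1 hj)
  have hle : ∀ w ∈ (G.neighborFinset v).erase u,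
      μ.real (CavityLeEv G l v w) = ∑ k ∈ Finset.range (l + 1), f k := fun w hw => by
    rw [measureReal_cavityLeEv ((hmem w).1 hw).1]
    exact Finset.sum_congr rfl fun k hk => hf k (hrange k hk) w ((hmem w).1 hw).1
  rw [cavityBlueEv_eq_biUnion_soleEv hmem, measureReal_biUnion_soleEv hμ hl
    (fun w hw => ((hmem w).1 hw).1) hle hrange (fun j => insert 0 (Finset.Ioc j l))
    (fun j hj w hw => hf j (hrange j hj) w ((hmem w).1 hw).1), hcard]
  simp only [measureReal_missEv hμ hp₀ hp]

theorem measureReal_cavityAtEv_eq (hμ : IsLabelMeasure μ p₀ p) (hp₀ : 0 ≤ p₀) (hp : 0 ≤ p)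
    (hreg : G.IsRegularOfDegree r) (hl : ((2 * l : ℕ) : ℕ∞) < G.egirth) (huv : G.Adj u v)
    (hab : G.Adj a b) : μ.real (CavityAtEv G l u v) = μ.real (CavityAtEv G l a b) := by
  induction l using Nat.strong_induction_on generalizing u v with
  | _ l ih =>
    cases l with
    | zero =>
      rw [cavityAtEv_zero, cavityAtEv_zero, measureReal_labelEv hμ hp₀ hp,
        measureReal_labelEv hμ hp₀ hp]
    | succ l =>
      have hAt : ∀ j ≤ l, ∀ x y, G.Adj x y →
          μ.real (CavityAtEv G j x y) = μ.real (CavityAtEv G j a b) := fun j hj x y hxy =>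
        ih j (Nat.lt_succ_iff.2 hj) ((Nat.cast_le.2 (by omega)).trans_lt hl) hxy
      rw [measureReal_cavityAtEv_succ hμ hp₀ hp huv, measureReal_cavityAtEv_succ hμ hp₀ hp hab,
        measureReal_cavityBlueEv hμ hp₀ hp hreg hl (fun j hj w => hAt j hj v w) huv,
        measureReal_cavityBlueEv hμ hp₀ hp hreg hl (fun j hj w => hAt j hj b w) hab]

theorem measureReal_cavityLeEv_eq (hμ : IsLabelMeasure μ p₀ p) (hp₀ : 0 ≤ p₀) (hp : 0 ≤ p)
    (hreg : G.IsRegularOfDegree r) (hl : ((2 * l : ℕ) : ℕ∞) < G.egirth) (huv : G.Adj u v)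
    (hab : G.Adj a b) : μ.real (CavityLeEv G l u v) = μ.real (CavityLeEv G l a b) := by
  have := hμ.1
  rw [measureReal_cavityLeEv huv, measureReal_cavityLeEv hab]
  refine Finset.sum_congr rfl fun j hj => measureReal_cavityAtEv_eq hμ hp₀ hp hreg ?_ huv hab
  have hjl := Finset.mem_range.1 hj
  exact (Nat.cast_le.2 (by omega)).trans_lt hl

theorem measureReal_cavityBlueEv_eq (hμ : IsLabelMeasure μ p₀ p) (hp₀ : 0 ≤ p₀) (hp : 0 ≤ p)
    (hreg : G.IsRegularOfDegree r) (hl : ((2 * (l + 1) : ℕ) : ℕ∞) < G.egirth) (huv : G.Adj u v)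
    (hab : G.Adj a b) : μ.real (CavityBlueEv G l u v) = μ.real (CavityBlueEv G l a b) := by
  have hAt : ∀ j ≤ l, ∀ x y, G.Adj x y →
      μ.real (CavityAtEv G j x y) = μ.real (CavityAtEv G j a b) := fun j hj x y hxy =>
    measureReal_cavityAtEv_eq hμ hp₀ hp hreg ((Nat.cast_le.2 (by omega)).trans_lt hl) hxy hab
  rw [measureReal_cavityBlueEv hμ hp₀ hp hreg hl (fun j hj w => hAt j hj v w) huv,
    measureReal_cavityBlueEv hμ hp₀ hp hreg hl (fun j hj w => hAt j hj b w) hab]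

theorem measureReal_cavityLeEv_lt_one (hμ : IsLabelMeasure μ p₀ p) (hp₀ : p₀ ∈ Ico (0 : ℝ) 1)
    (hp : 0 ≤ p) (hl : ((2 * l : ℕ) : ℕ∞) < G.egirth) (huv : G.Adj u v) :
    μ.real (CavityLeEv G l u v) < 1 := by
  have := hμ.1
  induction l generalizing u v with
  | zero =>
    calc μ.real (LabelEv (v, 0)) = p₀ := measureReal_labelEv hμ hp₀.1 hp v 0
      _ < 1 := hp₀.2
  | succ l ih =>
    have hadj : ∀ w ∈ G.neighborFinset v, G.Adj v w := fun w => (G.mem_neighborFinset v w).1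
    have hsub : MissEv {0} v ∩ ⋂ w ∈ G.neighborFinset v, (CavityLeEv G l v w)ᶜ ⊆
        (CavityLeEv G (l + 1) u v)ᶜ := by
      rintro ω ⟨hmiss, hnbr⟩ hle
      rcases cavityLe_iff_zero_mem_or_exists.1 hle with hzero | ⟨k, hk, -, w, ⟨⟨hvw, -⟩, hw⟩, -⟩
      · exact hmiss 0 (Finset.mem_singleton_self 0) hzero
      · exact mem_iInter₂.1 hnbr w ((G.mem_neighborFinset v w).2 hvw)
          (hw.mono (Nat.lt_succ_iff.1 hk))
    have hpos : 0 < μ.real (MissEv {0} v ∩ ⋂ w ∈ G.neighborFinset v, (CavityLeEv G l v w)ᶜ) := by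
      rw [measureReal_inter_biInter_branch hμ hl (measurableSet_labelSigma_missEv {0} v)
        fun w hw => (measurableSet_branch_cavityLeEv le_rfl (hadj w hw)).compl,
        measureReal_missEv_zero hμ hp₀.1 hp]
      refine mul_pos (sub_pos.2 hp₀.2) (Finset.prod_pos fun w hw => ?_)
      rw [probReal_compl_eq_one_sub (measurableSet_cavityLeEv (hadj w hw)), sub_pos]
      exact ih ((Nat.cast_le.2 (by omega)).trans_lt hl) (hadj w hw)
    rw [← sub_pos, ← probReal_compl_eq_one_sub (measurableSet_cavityLeEv huv)]
    exact hpos.trans_le (measureReal_mono hsub)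

end Homogeneity

section WhiteBlue

variable {G : SimpleGraph V} {μ : Measure (V → ℕ → Bool)} {p₀ p : ℝ} {r l : ℕ} {u v : V} {x d : ℝ}

theorem cond_real_apply {Ω : Type*} {m : MeasurableSpace Ω} {A : Set Ω} (hA : MeasurableSet A)
    (ν : Measure Ω) (B : Set Ω) : ν[|A].real B = (ν.real A)⁻¹ * ν.real (A ∩ B) := by
  simp only [measureReal_def, cond_apply hA, ENNReal.toReal_mul, ENNReal.toReal_inv]

theorem wEv_succ_subset : WEv G (l + 1) u ⊆ WEv G l u :=
  fun _ hω => white_antitone l.le_succ hω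

theorem bEv_inter_wEv [DecidableEq V] {N : Finset V} (hN : ∀ w, w ∈ N ↔ G.Adj u w)
    (huv : G.Adj u v) :
    BEv G l v ∩ WEv G l u = SoleEv G {0} N l u v (CavityBlueEv G l u v) := by
  ext ω
  simp only [BEv, WEv, mem_inter_iff, mem_ofPred_eq, blue_and_white_iff huv, SoleEv, MissEv,
    CavityBlueEv, CavityLeEv, Finset.mem_singleton, forall_eq, mem_iInter, Finset.mem_erase, hN,
    mem_compl_iff, and_imp]

theorem wEv_inter_bEv_succ [DecidableEq V] {N : Finset V} (hN : ∀ w, w ∈ N ↔ G.Adj u w) :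
    WEv G l u ∩ BEv G (l + 1) u = ⋃ q ∈ ({l + 1} : Finset ℕ) ×ˢ N,
      SoleEv G {0} N (l + 1) u q.2 (CavityAtEv G q.1 u q.2) := by
  ext ω
  simp only [BEv, WEv, mem_inter_iff, mem_ofPred_eq, white_and_blue_succ_iff, SoleEv, MissEv,
    CavityAtEv, CavityLeEv, Finset.mem_singleton, forall_eq, mem_iInter, Finset.mem_erase, hN,
    mem_compl_iff, and_imp, mem_iUnion, Finset.mem_product, Prod.exists, exists_prop, and_assoc,
    exists_and_left, exists_eq_left]

variable [G.LocallyFinite]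

theorem wEv_eq_inter_biInter :
    WEv G l u = MissEv {0} u ∩ ⋂ v ∈ G.neighborFinset u, (CavityLeEv G l u v)ᶜ := by
  ext ω
  simp only [WEv, mem_ofPred_eq, mem_white_iff, MissEv, CavityLeEv, Finset.mem_singleton,
    forall_eq, mem_inter_iff, mem_iInter, SimpleGraph.mem_neighborFinset, mem_compl_iff]

theorem measurableSet_wEv : MeasurableSet (WEv G l u) := by
  rw [wEv_eq_inter_biInter]
  exact (labelSigma_le _ _ (measurableSet_labelSigma_missEv _ u)).inter <|
    (G.neighborFinset u).measurableSet_biInter fun v hv =>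
      (measurableSet_cavityLeEv ((G.mem_neighborFinset u v).1 hv)).compl

theorem measureReal_wEv (hμ : IsLabelMeasure μ p₀ p) (hp₀ : 0 ≤ p₀) (hp : 0 ≤ p)
    (hreg : G.IsRegularOfDegree r) (hl : ((2 * (l + 1) : ℕ) : ℕ∞) < G.egirth)
    (hx : ∀ v, G.Adj u v → μ.real (CavityLeEv G l u v) = x) :
    μ.real (WEv G l u) = (1 - p₀) * (1 - x) ^ r := by
  have := hμ.1
  have hadj : ∀ v ∈ G.neighborFinset u, G.Adj u v := fun v => (G.mem_neighborFinset u v).1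
  rw [wEv_eq_inter_biInter, measureReal_inter_biInter_branch hμ hl
    (measurableSet_labelSigma_missEv {0} u)
    fun v hv => (measurableSet_branch_cavityLeEv le_rfl (hadj v hv)).compl,
    measureReal_missEv_zero hμ hp₀ hp, ← hreg u, ← SimpleGraph.card_neighborFinset_eq_degree]
  congr 1
  refine Finset.prod_eq_pow_card fun v hv => ?_
  rw [probReal_compl_eq_one_sub (measurableSet_cavityLeEv (hadj v hv)), hx v (hadj v hv)]

theorem measureReal_bEv_inter_wEv (hμ : IsLabelMeasure μ p₀ p) (hp₀ : 0 ≤ p₀) (hp : 0 ≤ p)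
    (hreg : G.IsRegularOfDegree r) (hl : ((2 * (l + 2) : ℕ) : ℕ∞) < G.egirth)
    (hx : ∀ w, G.Adj u w → μ.real (CavityLeEv G l u w) = x) (huv : G.Adj u v) :
    μ.real (BEv G l v ∩ WEv G l u) =
      (1 - p₀) * (μ.real (CavityBlueEv G l u v) * (1 - x) ^ (r - 1)) := by
  classical
  have hmem : ∀ w, w ∈ G.neighborFinset u ↔ G.Adj u w := G.mem_neighborFinset u
  rw [bEv_inter_wEv hmem huv, measureReal_soleEv hμ hl l.le_succ (fun w => (hmem w).1)
    (fun w hw => hx w ((hmem w).1 hw)) ((hmem v).2 huv)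
    (measurableSet_branch_cavityBlueEv l.lt_succ_self huv), measureReal_missEv_zero hμ hp₀ hp,
    SimpleGraph.card_neighborFinset_eq_degree, hreg u]

theorem measureReal_wEv_inter_bEv_succ (hμ : IsLabelMeasure μ p₀ p) (hp₀ : 0 ≤ p₀)
    (hp : 0 ≤ p) (hreg : G.IsRegularOfDegree r) (hl : ((2 * (l + 2) : ℕ) : ℕ∞) < G.egirth)
    (hx : ∀ v, G.Adj u v → μ.real (CavityLeEv G (l + 1) u v) = x)
    (hd : ∀ v, G.Adj u v → μ.real (CavityBlueEv G l u v) = d) :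
    μ.real (WEv G l u ∩ BEv G (l + 1) u) = r * ((1 - p₀) * (p * d * (1 - x) ^ (r - 1))) := by
  classical
  have hmem : ∀ w, w ∈ G.neighborFinset u ↔ G.Adj u w := G.mem_neighborFinset u
  have hAt : ∀ j ∈ ({l + 1} : Finset ℕ), ∀ w ∈ G.neighborFinset u,
      μ.real (CavityAtEv G j u w) = p * d := by
    intro j hj w hw
    rw [Finset.mem_singleton.1 hj, measureReal_cavityAtEv_succ hμ hp₀ hp ((hmem w).1 hw),
      hd w ((hmem w).1 hw)]
  rw [wEv_inter_bEv_succ hmem, measureReal_biUnion_soleEv hμ hl (fun w => (hmem w).1)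
    (fun w hw => hx w ((hmem w).1 hw)) (fun j hj => (Finset.mem_singleton.1 hj).le)
    (fun _ => {0}) hAt, Finset.sum_singleton, measureReal_missEv_zero hμ hp₀ hp,
    SimpleGraph.card_neighborFinset_eq_degree, hreg u]

theorem cond_real_wEv_succ (hμ : IsLabelMeasure μ p₀ p) (hp₀ : p₀ ∈ Ico (0 : ℝ) 1) (hp : 0 ≤ p)
    (hreg : G.IsRegularOfDegree r) (hl : ((2 * (l + 2) : ℕ) : ℕ∞) < G.egirth) (hx1 : x < 1)
    (hx : ∀ v, G.Adj u v → μ.real (CavityLeEv G l u v) = x)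
    (hd : ∀ v, G.Adj u v → μ.real (CavityBlueEv G l u v) = d) :
    (μ[|WEv G l u]).real (WEv G (l + 1) u) = (1 - p * d / (1 - x)) ^ r := by
  have hl' : ((2 * (l + 1) : ℕ) : ℕ∞) < G.egirth := (Nat.cast_le.2 (by omega)).trans_lt hl
  have hx' : ∀ v, G.Adj u v → μ.real (CavityLeEv G (l + 1) u v) = x + p * d := fun v huv => by
    rw [measureReal_cavityLeEv_succ hμ hp₀.1 hp huv, hx v huv, hd v huv]
  rw [cond_real_apply measurableSet_wEv, inter_eq_right.2 wEv_succ_subset,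
    measureReal_wEv hμ hp₀.1 hp hreg hl' hx, measureReal_wEv hμ hp₀.1 hp hreg hl hx',
    one_sub_div (sub_pos.2 hx1).ne', sub_sub, div_pow, ← div_eq_inv_mul,
    mul_div_mul_left _ _ (sub_pos.2 hp₀.2).ne']

theorem cond_real_bEv_succ (hμ : IsLabelMeasure μ p₀ p) (hp₀ : p₀ ∈ Ico (0 : ℝ) 1) (hp : 0 ≤ p)
    (hreg : G.IsRegularOfDegree r) (hl : ((2 * (l + 2) : ℕ) : ℕ∞) < G.egirth) (hx1 : x < 1)
    (hx : ∀ v, G.Adj u v → μ.real (CavityLeEv G l u v) = x)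
    (hd : ∀ v, G.Adj u v → μ.real (CavityBlueEv G l u v) = d) :
    (μ[|WEv G l u]).real (BEv G (l + 1) u) =
      r * (p * d / (1 - x)) * (1 - p * d / (1 - x)) ^ (r - 1) := by
  have hl' : ((2 * (l + 1) : ℕ) : ℕ∞) < G.egirth := (Nat.cast_le.2 (by omega)).trans_lt hl
  have hx' : ∀ v, G.Adj u v → μ.real (CavityLeEv G (l + 1) u v) = x + p * d := fun v huv => by
    rw [measureReal_cavityLeEv_succ hμ hp₀.1 hp huv, hx v huv, hd v huv]
  have hx0 : 1 - x ≠ 0 := (sub_pos.2 hx1).ne'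
  have hp1 : 1 - p₀ ≠ 0 := (sub_pos.2 hp₀.2).ne'
  rw [cond_real_apply measurableSet_wEv, measureReal_wEv hμ hp₀.1 hp hreg hl' hx,
    measureReal_wEv_inter_bEv_succ hμ hp₀.1 hp hreg hl hx' hd, one_sub_div hx0, sub_sub,
    div_pow]
  cases r with
  | zero => simp only [Nat.cast_zero, zero_mul, mul_zero]
  | succ r =>
    rw [Nat.add_sub_cancel, pow_succ]
    field_simp

theorem mul_real_bEv_inter_wEv_div_real_wEv (hμ : IsLabelMeasure μ p₀ p)
    (hp₀ : p₀ ∈ Ico (0 : ℝ) 1) (hp : 0 ≤ p) (hreg : G.IsRegularOfDegree r)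
    (hl : ((2 * (l + 2) : ℕ) : ℕ∞) < G.egirth) (hx1 : x < 1)
    (hx : ∀ v w, G.Adj v w → μ.real (CavityLeEv G l v w) = x) (huv : G.Adj u v)
    (hd : μ.real (CavityBlueEv G l v u) = d) :
    p * μ.real (BEv G l u ∩ WEv G l v) / μ.real (WEv G l u) = p * d / (1 - x) := by
  have hl' : ((2 * (l + 1) : ℕ) : ℕ∞) < G.egirth := (Nat.cast_le.2 (by omega)).trans_lt hl
  have hx0 : 1 - x ≠ 0 := (sub_pos.2 hx1).ne'
  have hp1 : 1 - p₀ ≠ 0 := (sub_pos.2 hp₀.2).ne'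
  have hr : r ≠ 0 := hreg u ▸ ((G.degree_pos_iff_exists_adj u).2 ⟨v, huv⟩).ne'
  rw [measureReal_bEv_inter_wEv hμ hp₀.1 hp hreg hl (hx v) huv.symm, hd,
    measureReal_wEv hμ hp₀.1 hp hreg hl' (hx u), ← mul_pow_sub_one hr (1 - x)]
  field_simp

theorem cond_prob_white_and_blue_given_white_general
    (hμ : IsLabelMeasure μ p₀ p) (hp₀ : p₀ ∈ Ico (0 : ℝ) 1) (hp : 0 ≤ p)
    (hreg : G.IsRegularOfDegree r) (hl : ((2 * (l + 2) : ℕ) : ℕ∞) < G.egirth) (u : V) {a c : V}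
    (hac : G.Adj a c) :
    (μ[|WEv G l u]).real (WEv G (l + 1) u) =
        (1 - p * μ.real (BEv G l a ∩ WEv G l c) / μ.real (WEv G l a)) ^ r ∧
      (μ[|WEv G l u]).real (BEv G (l + 1) u) =
        r * p * μ.real (BEv G l a ∩ WEv G l c) / μ.real (WEv G l a) *
          (1 - p * μ.real (BEv G l a ∩ WEv G l c) / μ.real (WEv G l a)) ^ (r - 1) := by
  have hgirth {k : ℕ} (hk : k ≤ l + 2) : ((2 * k : ℕ) : ℕ∞) < G.egirth :=
    (Nat.cast_le.2 (by omega)).trans_lt hl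
  let x := μ.real (CavityLeEv G l a c)
  let d := μ.real (CavityBlueEv G l a c)
  have hx : ∀ v w, G.Adj v w → μ.real (CavityLeEv G l v w) = x := fun v w hvw =>
    measureReal_cavityLeEv_eq hμ hp₀.1 hp hreg (hgirth (by omega)) hvw hac
  have hd : ∀ v w, G.Adj v w → μ.real (CavityBlueEv G l v w) = d := fun v w hvw =>
    measureReal_cavityBlueEv_eq hμ hp₀.1 hp hreg (hgirth (by omega)) hvw hac
  have hx1 : x < 1 := measureReal_cavityLeEv_lt_one hμ hp₀ hp (hgirth (by omega)) hac
  rw [mul_assoc (r : ℝ), mul_div_assoc (r : ℝ),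
    mul_real_bEv_inter_wEv_div_real_wEv hμ hp₀ hp hreg hl hx1 hx hac (hd c a hac.symm)]
  exact ⟨cond_real_wEv_succ hμ hp₀ hp hreg hl hx1 (hx u) (hd u),
    cond_real_bEv_succ hμ hp₀ hp hreg hl hx1 (hx u) (hd u)⟩

end WhiteBlue

theorem IsRegular.isRegularOfDegree {G : SimpleGraph V} [G.LocallyFinite] {r : ℕ}
    (hG : IsRegular G r) : G.IsRegularOfDegree r := fun v => by
  rw [← hG v, ← G.card_neighborSet_eq_degree, Set.ncard_eq_toFinset_card', Set.toFinset_card]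

/-- `P(u ∈ W_i | u ∈ W_{i−1}) = (1 − p·s_{i−1}/w_{i−1})^r` and
`P(u ∈ B_i | u ∈ W_{i−1}) = (r·p·s_{i−1}/w_{i−1})·(1 − p·s_{i−1}/w_{i−1})^{r−1}`,
where `w_{i−1}` and `s_{i−1}` are computed from any vertex `a` and neighbour `c`. -/
theorem cond_prob_white_and_blue_given_white
    [Fintype V] (r g : ℕ) (G : SimpleGraph V)
    (hreg : IsRegular G r) (hg : (g : ℕ∞) ≤ G.egirth)
    (p₀ p : ℝ) (hp₀ : p₀ ∈ Ioo (0 : ℝ) 1) (hp : p ∈ Ioo (0 : ℝ) 1)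
    (μ : Measure (V → ℕ → Bool)) (hμ : IsLabelMeasure μ p₀ p)
    (i : ℕ) (hi : 1 ≤ i) (hi1 : 2 * i < g - 3) (hi2 : 2 * (i + 2) < g - 2)
    (u a c : V) (hac : G.Adj a c) :
    (μ[|WEv G (i - 1) u] (WEv G i u)).toReal
      = (1 - p * (μ (BEv G (i - 1) a ∩ WEv G (i - 1) c)).toReal
            / (μ (WEv G (i - 1) a)).toReal) ^ r ∧
    (μ[|WEv G (i - 1) u] (BEv G i u)).toReal
      = r * p * (μ (BEv G (i - 1) a ∩ WEv G (i - 1) c)).toReal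
            / (μ (WEv G (i - 1) a)).toReal
          * (1 - p * (μ (BEv G (i - 1) a ∩ WEv G (i - 1) c)).toReal
              / (μ (WEv G (i - 1) a)).toReal) ^ (r - 1) := by
  have : G.LocallyFinite := fun v => Fintype.ofFinite (G.neighborSet v)
  obtain ⟨l, rfl⟩ := Nat.exists_eq_add_of_le' hi
  exact cond_prob_white_and_blue_given_white_general hμ (Ioo_subset_Ico_self hp₀) hp.1.le
    hreg.isRegularOfDegree ((Nat.cast_lt.2 (by omega)).trans_le hg) u hac

end InducedForest
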